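/- Let M = p^α be a prime power. If a set A ⊆ ℤ_M pd-tiles ℤ_M, then A tiles ℤ_M properly, i.e., there exists a set B ⊆ ℤ_M with A ⊕ B = ℤ_M. -/

import Mathlib

/-!
Call a level `s < α` *vanishing* when the Fourier transform of `1_A` is zero at some frequency of
order `p^(s+1)`; let `S` be the set of vanishing levels and `T` its complement in `{0, …, α - 1}`.

* At a vanishing level the cyclotomic polynomial `Φ_{p^(s+1)}` divides `∑_{a ∈ A} X^a`, so every
  class mod `p^s` has its members in `A` equidistributed among its `p` subclasses mod `p^(s+1)`
  (`classCount_eq_of_vanish`).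
* At a non-vanishing level, `1_A * f = 1` forces the transform of `f` to vanish at all frequencies
  of order `p^(s+1)`. Choosing `p^|T|` frequencies whose differences all have such orders, a
  Delsarte-type positivity argument (`card_le_sum`) gives `p^|T| ≤ ∑ f = M / |A|`, that is,
  `|A| ≤ p^|S|`. Only `f ≥ 0` and `f 0 = 1` enter here; positive definiteness of `f` is not needed.

Equidistribution at the levels in `S` together with `|A| ≤ p^|S|` forces `|A| = p^|S|` and leaves no
room for two elements of `A` to separate at a level in `T` (`le_card_and_mem`). Hence the set `B` of
residues whose base-`p` digits vanish outside `T` satisfies `(A - A) ∩ (B - B) = {0}` and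
`|A| |B| = M`, so `A ⊕ B = ℤ_M`.
-/

open Finset

noncomputable def fhat (M : ℕ) [NeZero M] (f : ZMod M → ℝ) (ξ : ZMod M) : ℂ :=
  ∑ z : ZMod M, (f z : ℂ) *
    Complex.exp (-2 * Real.pi * Complex.I * ((z.val : ℂ) * (ξ.val : ℂ)) / (M : ℂ))

noncomputable def conv (M : ℕ) [NeZero M] (f g : ZMod M → ℝ) (x : ZMod M) : ℝ :=
  ∑ y : ZMod M, f y * g (x - y)

def IsStepFun (M : ℕ) [NeZero M] (f : ZMod M → ℝ) : Prop :=
  ∀ z w : ZMod M, Nat.gcd z.val M = Nat.gcd w.val M → f z = f w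

/-- `Φ_d | F` : the Fourier transform of `f` vanishes on the step class `R_{M/d}`. -/
def cycDvd (M : ℕ) [NeZero M] (f : ZMod M → ℝ) (d : ℕ) : Prop :=
  ∀ ξ : ZMod M, Nat.gcd ξ.val M = M / d → fhat M f ξ = 0

open scoped Classical in
noncomputable def SF (M : ℕ) [NeZero M] (f : ZMod M → ℝ) : Finset ℕ :=
  M.divisors.filter (fun s => IsPrimePow s ∧ cycDvd M f s)

noncomputable def satT1 (M : ℕ) [NeZero M] (f : ZMod M → ℝ) : Prop :=
  ∑ z : ZMod M, f z = ∏ s ∈ SF M f, (s.minFac : ℝ)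

def satT2 (M : ℕ) [NeZero M] (f : ZMod M → ℝ) : Prop :=
  ∀ S : Finset ℕ, S.Nonempty → S ⊆ SF M f →
    (∀ s ∈ S, ∀ t ∈ S, s ≠ t → s.minFac ≠ t.minFac) →
    cycDvd M f (∏ s ∈ S, s)

def IsTiling (M : ℕ) [NeZero M] (A B : Finset (ZMod M)) : Prop :=
  ∀ z : ZMod M, ∃! ab : ZMod M × ZMod M, ab.1 ∈ A ∧ ab.2 ∈ B ∧ ab.1 + ab.2 = z

/-- `H` is a union of step classes. -/
def IsStepSet (M : ℕ) [NeZero M] (H : Set (ZMod M)) : Prop :=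
  ∀ z w : ZMod M, Nat.gcd z.val M = Nat.gcd w.val M → (z ∈ H ↔ w ∈ H)

def divStar (M : ℕ) [NeZero M] (A : Finset (ZMod M)) : Set (ZMod M) :=
  {z | ∃ a ∈ A, ∃ a' ∈ A, Nat.gcd z.val M = Nat.gcd (a - a').val M}

noncomputable def cliqueNum (M : ℕ) [NeZero M] (H : Set (ZMod M)) : ℕ :=
  sSup {n | ∃ C : Finset (ZMod M), (∀ x ∈ C, ∀ y ∈ C, x - y ∈ H) ∧ C.card = n}

noncomputable def Dplus (M : ℕ) [NeZero M] (H : Set (ZMod M)) : ℝ :=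
  sSup {t : ℝ | ∃ h : ZMod M → ℝ, IsStepFun M h ∧ h 0 = 1 ∧
    (∀ ξ, (fhat M h ξ).im = 0 ∧ 0 ≤ (fhat M h ξ).re) ∧
    (∀ z ∈ H, 0 ≤ h z) ∧ (∀ z ∉ H, h z = 0) ∧ t = ∑ z : ZMod M, h z}

noncomputable def Dminus (M : ℕ) [NeZero M] (H : Set (ZMod M)) : ℝ :=
  sSup {t : ℝ | ∃ h : ZMod M → ℝ, IsStepFun M h ∧ h 0 = 1 ∧
    (∀ ξ, (fhat M h ξ).im = 0 ∧ 0 ≤ (fhat M h ξ).re) ∧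
    (∀ z ∉ H, h z ≤ 0) ∧ t = ∑ z : ZMod M, h z}

noncomputable def Ddelta (M : ℕ) [NeZero M] (δ : ℝ) (H : Set (ZMod M)) : ℝ :=
  sSup {t : ℝ | ∃ h : ZMod M → ℝ, IsStepFun M h ∧ h 0 = 1 ∧
    (∀ ξ, (fhat M h ξ).im = 0 ∧ 0 ≤ (fhat M h ξ).re) ∧
    (∀ z ∈ H, δ ≤ h z) ∧ (∀ z ∉ H, h z = 0) ∧ t = ∑ z : ZMod M, h z}

open scoped Classical in
noncomputable def SH (M : ℕ) [NeZero M] (H : Set (ZMod M)) : Finset ℕ :=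
  M.divisors.filter (fun s => IsPrimePow s ∧ ∀ ξ : ZMod M, Nat.gcd ξ.val M = M / s → ξ ∈ H)

noncomputable def kH (M : ℕ) [NeZero M] (H : Set (ZMod M)) : ℕ :=
  ∏ s ∈ SH M H, s.minFac

def cubVertex (M : ℕ) [NeZero M] {K : ℕ} (p : Fin K → ℕ) (c : ZMod M)
    (ρ : Fin K → ℕ) (S : Finset (Fin K)) : ZMod M :=
  c + ∑ i ∈ S, ((ρ i * (M / p i) : ℕ) : ZMod M)

noncomputable def cubEval (M : ℕ) [NeZero M] {K : ℕ} (p : Fin K → ℕ) (c : ZMod M)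
    (ρ : Fin K → ℕ) (f : ZMod M → ℝ) : ℝ :=
  ∑ S : Finset (Fin K), (-1 : ℝ) ^ S.card * f (cubVertex M p c ρ S)

noncomputable def hAfun (M : ℕ) [NeZero M] (A : Finset (ZMod M)) (z : ZMod M) : ℝ :=
  (1 / ((A.card : ℝ) * (Nat.totient M : ℝ))) *
    ∑ r ∈ Finset.univ.filter (fun r : ZMod M => Nat.gcd r.val M = 1),
      conv M (fun x => if x ∈ A.image (fun a => r * a) then (1 : ℝ) else 0)
             (fun x => if x ∈ A.image (fun a => -(r * a)) then (1 : ℝ) else 0) z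

noncomputable def fN (M : ℕ) [NeZero M] (f : ZMod M → ℝ) (N : ℕ) (z : ZMod N) : ℝ :=
  ∑ y ∈ Finset.univ.filter (fun y : ZMod M => ((y.val : ℕ) : ZMod N) = z), f y

/-! ### Digit sets -/

/-- There are `p ^ |T|` integers any two of which first differ, in base `p`, at a position in `T`:
those whose base-`p` digits vanish outside `T`. The positions are added in increasing order, so
that a new digit never changes the first position of disagreement of older elements. -/
theorem exists_digitSet {p : ℕ} (hp : p.Prime) (T : Finset ℕ) :
    ∃ E : Finset ℤ, E.card = p ^ T.card ∧ ∀ x ∈ E, ∀ y ∈ E, x ≠ y →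
      ∃ t ∈ T, (p : ℤ) ^ t ∣ x - y ∧ ¬ (p : ℤ) ^ (t + 1) ∣ x - y := by
  induction T using Finset.induction_on_max with
  | empty => exact ⟨{0}, by simp, by simp +contextual⟩
  | insert t T hT ih =>
    obtain ⟨E, hcard, hE⟩ := ih
    have htT : t ∉ T := fun h => lt_irrefl _ (hT t h)
    have hp0 : (p : ℤ) ≠ 0 := by exact_mod_cast hp.ne_zero
    have key : ∀ u ∈ E ×ˢ Finset.range p, ∀ v ∈ E ×ˢ Finset.range p, u ≠ v →
        ∃ s ∈ insert t T, (p : ℤ) ^ s ∣ (u.1 + u.2 * (p : ℤ) ^ t) - (v.1 + v.2 * (p : ℤ) ^ t) ∧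
          ¬ (p : ℤ) ^ (s + 1) ∣ (u.1 + u.2 * (p : ℤ) ^ t) - (v.1 + v.2 * (p : ℤ) ^ t) := by
      rintro ⟨x, d⟩ hu ⟨y, d'⟩ hv huv
      simp only [Finset.mem_product, Finset.mem_range] at hu hv
      simp only
      by_cases hxy : x = y
      · subst hxy
        have hd : d ≠ d' := by rintro rfl; exact huv rfl
        have h1 : (x + (d : ℤ) * (p : ℤ) ^ t) - (x + d' * (p : ℤ) ^ t) =
            (p : ℤ) ^ t * ((d : ℤ) - d') := by ring
        refine ⟨t, Finset.mem_insert_self _ _, ?_, ?_⟩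
        · rw [h1]; exact dvd_mul_right _ _
        · rw [h1, pow_succ]
          intro h
          have h2 := Int.dvd_of_mul_dvd_mul_left (pow_ne_zero t hp0) h
          have := Int.eq_zero_of_abs_lt_dvd h2 (by rw [abs_lt]; omega)
          omega
      · obtain ⟨s, hs, h1, h2⟩ := hE x hu.1 y hv.1 hxy
        have hst := hT s hs
        have h3 : (x + (d : ℤ) * (p : ℤ) ^ t) - (y + d' * (p : ℤ) ^ t) =
            (x - y) + (p : ℤ) ^ t * ((d : ℤ) - d') := by ring
        refine ⟨s, Finset.mem_insert_of_mem hs, ?_, ?_⟩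
        · rw [h3]
          exact dvd_add h1 (Dvd.dvd.mul_right (pow_dvd_pow _ hst.le) _)
        · rw [h3]
          intro h
          exact h2 ((dvd_add_left (Dvd.dvd.mul_right (pow_dvd_pow _ hst) _)).1 h)
    refine ⟨(E ×ˢ Finset.range p).image fun u => u.1 + u.2 * (p : ℤ) ^ t, ?_, ?_⟩
    · rw [Finset.card_image_of_injOn, Finset.card_product, hcard, Finset.card_range,
        Finset.card_insert_of_notMem htT, pow_succ]
      intro u hu v hv huv
      by_contra hne
      obtain ⟨s, -, -, h⟩ := key u hu v hv hne
      simp only at huv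
      exact h (by rw [huv, sub_self]; exact dvd_zero _)
    · intro x hx y hy hxy
      obtain ⟨u, hu, rfl⟩ := Finset.mem_image.1 hx
      obtain ⟨v, hv, rfl⟩ := Finset.mem_image.1 hy
      exact key u hu v hv (by rintro rfl; exact hxy rfl)

/-! ### Vanishing of the Fourier transform and equidistribution -/

/-- The sum of the coefficients of an integer polynomial at the exponents congruent to `r`
modulo `m`. -/
noncomputable def classSum (m : ℕ) (r : ℤ) : Polynomial ℤ →ₗ[ℤ] ℤ :=
  Polynomial.lsum fun i => if (m : ℤ) ∣ i - r then LinearMap.id else 0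

theorem classSum_monomial (m : ℕ) (r : ℤ) (i : ℕ) (c : ℤ) :
    classSum m r (Polynomial.monomial i c) = if (m : ℤ) ∣ i - r then c else 0 := by
  simp only [classSum, Polynomial.lsum_apply]
  rw [Polynomial.sum_monomial_index]
  · split_ifs <;> simp
  · simp

theorem classSum_shift (m : ℕ) (r : ℤ) (d : ℕ) (P : Polynomial ℤ) :
    classSum m r ((Polynomial.X ^ m) ^ d * P) = classSum m r P := by
  induction P using Polynomial.induction_on' with
  | add P Q hP hQ => rw [mul_add, map_add, map_add, hP, hQ]
  | monomial i c =>
    rw [← pow_mul, Polynomial.X_pow_mul, Polynomial.monomial_mul_X_pow, classSum_monomial,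
      classSum_monomial]
    have : ((i + m * d : ℕ) : ℤ) - r = (i - r) + m * d := by push_cast; ring
    rw [this]
    simp only [dvd_add_left (dvd_mul_right (m : ℤ) d)]

/-- The residue class of `r` mod `m` is the disjoint union of `p` classes mod `m * p`, namely the
translates of the class of `r` by multiples of `m`. -/
theorem sum_classSum_shift {p : ℕ} (hp : 0 < p) {m : ℕ} (hm : 0 < m) (r : ℤ) (P : Polynomial ℤ) :
    ∑ d ∈ Finset.range p, classSum (m * p) r ((Polynomial.X ^ m) ^ d * P) = classSum m r P := by
  induction P using Polynomial.induction_on' with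
  | add P Q hP hQ => simp only [mul_add, map_add, Finset.sum_add_distrib, hP, hQ]
  | monomial i c =>
    simp only [← pow_mul, Polynomial.X_pow_mul, Polynomial.monomial_mul_X_pow, classSum_monomial]
    have h1 : ∀ d : ℕ, ((i + m * d : ℕ) : ℤ) - r = (i - r) + m * d := by
      intro d; push_cast; ring
    simp only [h1]
    have hm0 : (m : ℤ) ≠ 0 := by exact_mod_cast hm.ne'
    have hp0 : (p : ℤ) ≠ 0 := by exact_mod_cast hp.ne'
    split_ifs with h
    · obtain ⟨k, hk⟩ := h
      have h2 : ∀ d : ℕ, (((m * p : ℕ) : ℤ) ∣ (i - r) + m * d) ↔ (p : ℤ) ∣ k + d := by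
        intro d
        rw [hk, ← mul_add, Nat.cast_mul]
        exact mul_dvd_mul_iff_left hm0
      simp only [h2]
      have h3 := Int.emod_nonneg (-k) hp0
      have h4 := Int.emod_lt_of_pos (-k) (by exact_mod_cast hp : (0 : ℤ) < p)
      have h5 := Int.emod_add_mul_ediv (-k) p
      rw [Finset.sum_eq_single (((-k) % p).toNat)]
      · rw [if_pos]
        rw [Int.toNat_of_nonneg h3]
        exact ⟨-(-k / p), by linarith⟩
      · intro d hd hne
        rw [if_neg]
        intro hdv
        apply hne
        rw [Finset.mem_range] at hd
        have h6 : (p : ℤ) ∣ d - (-k) % p := by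
          have : (d : ℤ) - (-k) % p = (k + d) + p * (-k / p) := by linarith
          rw [this]
          exact dvd_add hdv (dvd_mul_right _ _)
        have := Int.eq_zero_of_abs_lt_dvd h6 (by rw [abs_lt]; omega)
        omega
      · intro hn
        exact absurd (Finset.mem_range.2 (by omega)) hn
    · refine Finset.sum_eq_zero fun d _ => if_neg fun h' => h ?_
      have : (m : ℤ) ∣ (i - r) + m * d :=
        dvd_trans (by rw [Nat.cast_mul]; exact dvd_mul_right _ _) h'
      exact (dvd_add_left (dvd_mul_right (m : ℤ) d)).1 this

/-- If `Φ_{p^(s+1)} = 1 + X^{p^s} + ⋯ + X^{(p-1)p^s}` divides `P`, then the coefficients of `P` in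
a class mod `p^s` have `p` times the sum of those in any of its subclasses mod `p^(s+1)`. -/
theorem classSum_of_cyclotomic_dvd {p : ℕ} (hp : p.Prime) (s : ℕ) (r : ℤ) {P : Polynomial ℤ}
    (h : Polynomial.cyclotomic (p ^ (s + 1)) ℤ ∣ P) :
    classSum (p ^ s) r P = p * classSum (p ^ (s + 1)) r P := by
  obtain ⟨Q, rfl⟩ := h
  rw [Polynomial.cyclotomic_prime_pow_eq_geom_sum hp, Finset.sum_mul, map_sum, map_sum, pow_succ,
    sum_classSum_shift hp.pos (pow_pos hp.pos s)]
  simp [classSum_shift]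

/-- The number of elements of `A`, represented in `{0, …, M - 1}`, congruent to `r` mod `m`. -/
noncomputable def classCount {M : ℕ} (A : Finset (ZMod M)) (m : ℕ) (r : ℤ) : ℕ :=
  (A.filter fun a => (m : ℤ) ∣ (a.val : ℤ) - r).card

/-- If the Fourier transform of `1_A` vanishes at a single frequency of order `p^(s+1)`, then `A` is
equidistributed when passing from residues mod `p^s` to residues mod `p^(s+1)`: the minimal
polynomial of a primitive `p^(s+1)`-th root of unity is cyclotomic, hence divides `∑ X^a`. -/
theorem classCount_eq_of_vanish {M : ℕ} [NeZero M] {p α s : ℕ} (hp : p.Prime) (hM : M = p ^ α)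
    (hs : s < α) (A : Finset (ZMod M)) (n : ℤ) (h1 : (p : ℤ) ^ (α - 1 - s) ∣ n)
    (h2 : ¬ (p : ℤ) ^ (α - 1 - s + 1) ∣ n)
    (h0 : ∑ a ∈ A, (ZMod.stdAddChar (-(a * (n : ZMod M))) : ℂ) = 0) (r : ℤ) :
    classCount A (p ^ s) r = p * classCount A (p ^ (s + 1)) r := by
  have := Fact.mk hp
  have hp0 : (p : ℤ) ≠ 0 := by exact_mod_cast hp.ne_zero
  set ζ : ℂ := ZMod.stdAddChar (-(n : ZMod M)) with hζ
  have hpow : ∀ k : ℕ, ζ ^ k = ZMod.stdAddChar (-((k : ZMod M) * (n : ZMod M))) := by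
    intro k
    rw [hζ, ← AddChar.map_nsmul_eq_pow]
    congr 1
    simp
  have hone : ∀ k : ℕ, ζ ^ k = 1 ↔ (M : ℤ) ∣ k * n := by
    intro k
    rw [hpow, ← (ZMod.stdAddChar (N := M)).map_zero_eq_one, ZMod.injective_stdAddChar.eq_iff,
      neg_eq_zero, ← ZMod.intCast_zmod_eq_zero_iff_dvd]
    simp
  have hα : α = s + (α - 1 - s + 1) := by omega
  have hprim : IsPrimitiveRoot ζ (p ^ (s + 1)) := by
    have : orderOf ζ = p ^ (s + 1) := by
      apply orderOf_eq_prime_pow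
      · rw [hone, hM]
        intro h
        apply h2
        rw [hα] at h
        push_cast at h
        rw [pow_add] at h
        exact Int.dvd_of_mul_dvd_mul_left (pow_ne_zero s hp0) h
      · rw [hone, hM]
        have : α = (s + 1) + (α - 1 - s) := by omega
        rw [this]
        push_cast
        rw [pow_add]
        apply mul_dvd_mul_left
        convert h1 using 2
    rw [← this]
    exact IsPrimitiveRoot.orderOf ζ
  set P : Polynomial ℤ := ∑ a ∈ A, Polynomial.monomial a.val 1 with hP
  have hev : Polynomial.aeval ζ P = 0 := by
    rw [hP, map_sum, ← h0]
    refine Finset.sum_congr rfl fun a _ => ?_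
    rw [Polynomial.aeval_monomial, hpow]
    simp
  have hdvd : Polynomial.cyclotomic (p ^ (s + 1)) ℤ ∣ P := by
    rw [Polynomial.cyclotomic_eq_minpoly hprim (pow_pos hp.pos _)]
    exact minpoly.isIntegrallyClosed_dvd (hprim.isIntegral (pow_pos hp.pos _)) hev
  have hcount : ∀ m : ℕ, classSum m r P = classCount A m r := by
    intro m
    rw [hP, map_sum]
    simp [classSum_monomial, classCount]
  have := classSum_of_cyclotomic_dvd hp s r hdvd
  rw [hcount, hcount] at this
  exact_mod_cast this

/-! ### The Fourier transform -/

theorem fhat_eq (M : ℕ) [NeZero M] (f : ZMod M → ℝ) (ξ : ZMod M) :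
    fhat M f ξ = ∑ z : ZMod M, (f z : ℂ) * ZMod.stdAddChar (-(z * ξ)) := by
  refine Finset.sum_congr rfl fun z _ => ?_
  congr 1
  have : -(z * ξ) = ((-(z.val * ξ.val : ℤ) : ℤ) : ZMod M) := by simp
  rw [this, ZMod.stdAddChar_coe]
  congr 1
  push_cast
  ring

theorem fhat_conv (M : ℕ) [NeZero M] (f g : ZMod M → ℝ) (ξ : ZMod M) :
    fhat M (conv M f g) ξ = fhat M f ξ * fhat M g ξ := by
  simp only [fhat_eq, conv]
  rw [Finset.sum_mul]
  push_cast
  simp only [Finset.sum_mul]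
  rw [Finset.sum_comm]
  refine Finset.sum_congr rfl fun y _ => ?_
  rw [← Equiv.sum_comp (Equiv.addRight y), Finset.mul_sum]
  refine Finset.sum_congr rfl fun x _ => ?_
  have : -((x + y) * ξ) = -(y * ξ) + -(x * ξ) := by ring
  simp only [Equiv.coe_addRight, add_sub_cancel_right]
  rw [this, AddChar.map_add_eq_mul]
  ring

theorem fhat_one (M : ℕ) [NeZero M] {ξ : ZMod M} (hξ : ξ ≠ 0) : fhat M (fun _ => 1) ξ = 0 := by
  rw [fhat_eq]
  have := AddChar.sum_mulShift (-ξ) (ZMod.isPrimitive_stdAddChar M)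
  rw [if_neg (neg_ne_zero.2 hξ)] at this
  simpa using this

/-- A Delsarte-type bound. If `f ≥ 0`, `f 0 = 1` and `fhat M f` vanishes on the nonzero differences
of `D`, then `|D| ≤ ∑ f`: evaluate `∑_{d, d'} fhat (d - d')` both as `|D| * fhat 0` and as
`∑ z, f z * |∑ d, ψ (-z d)|²`, whose term at `z = 0` is `|D|²`. -/
theorem card_le_sum (M : ℕ) [NeZero M] (f : ZMod M → ℝ) (hf0 : f 0 = 1) (hf : ∀ z, 0 ≤ f z)
    (D : Finset (ZMod M)) (hD : ∀ d ∈ D, ∀ d' ∈ D, d ≠ d' → fhat M f (d - d') = 0) :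
    (D.card : ℝ) ≤ ∑ z, f z := by
  rcases D.eq_empty_or_nonempty with rfl | hne
  · simpa using Finset.sum_nonneg fun z _ => hf z
  have hpos : (0 : ℝ) < D.card := by exact_mod_cast hne.card_pos
  set g : ZMod M → ℂ := fun z => ∑ d ∈ D, ZMod.stdAddChar (-(z * d)) with hg
  have h1 : ∑ d ∈ D, ∑ d' ∈ D, fhat M f (d - d') = D.card * ∑ z, (f z : ℂ) := by
    have : ∀ d ∈ D, ∑ d' ∈ D, fhat M f (d - d') = ∑ z, (f z : ℂ) := by
      intro d hd
      rw [Finset.sum_eq_single_of_mem d hd fun d' hd' hne => hD d hd d' hd' hne.symm, fhat_eq]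
      simp
    rw [Finset.sum_congr rfl this]
    simp
  have h2 : ∑ d ∈ D, ∑ d' ∈ D, fhat M f (d - d') = ∑ z, (f z : ℂ) * (Complex.normSq (g z) : ℂ) := by
    simp only [fhat_eq]
    refine (Finset.sum_congr rfl fun d _ => Finset.sum_comm).trans (Finset.sum_comm.trans ?_)
    refine Finset.sum_congr rfl fun z _ => ?_
    rw [← Complex.mul_conj, hg]
    simp only [map_sum, ← AddChar.map_neg_eq_conj]
    rw [Finset.sum_mul_sum, Finset.mul_sum]
    refine Finset.sum_congr rfl fun d _ => ?_
    rw [Finset.mul_sum]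
    refine Finset.sum_congr rfl fun d' _ => ?_
    rw [← AddChar.map_add_eq_mul]
    congr 2
    ring
  have h3 : (D.card : ℝ) * ∑ z, f z = ∑ z, f z * Complex.normSq (g z) := by
    have := h1.symm.trans h2
    exact_mod_cast this
  have h4 : f 0 * Complex.normSq (g 0) ≤ ∑ z, f z * Complex.normSq (g z) :=
    Finset.single_le_sum (f := fun z => f z * Complex.normSq (g z))
      (fun z _ => mul_nonneg (hf z) (Complex.normSq_nonneg _)) (Finset.mem_univ 0)
  have h5 : Complex.normSq (g 0) = (D.card : ℝ) * D.card := by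
    simp [hg, Complex.normSq_natCast]
  rw [hf0, h5, one_mul, ← h3] at h4
  exact le_of_mul_le_mul_left h4 hpos

/-! ### Counting along the tree of residues -/

/-- If `A` is nonempty, equidistributed at each level in `S`, and `|A| ≤ p ^ |S|`, then
`|A| = p ^ |S|` and two distinct elements of `A` first differ, in base `p`, at a level in `S`. With
`N s` the number of elements of `A` congruent to `a` mod `p^s`, the quantity
`p ^ #{t ∈ S | t < s} * N s` is nonincreasing in `s`, equals `|A|` at `s = 0`, is at least
`p ^ |S|` at `s = α`, and drops strictly at a level outside `S` where an element of `A` separates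
from `a`. -/
theorem le_card_and_mem {M p α : ℕ} (hp : p.Prime) {A : Finset (ZMod M)} {S : Finset ℕ}
    (hSα : S ⊆ Finset.range α)
    (hS : ∀ s ∈ S, ∀ r : ℤ, classCount A (p ^ s) r = p * classCount A (p ^ (s + 1)) r)
    (hcard : A.card ≤ p ^ S.card) {a : ZMod M} (ha : a ∈ A) :
    p ^ S.card ≤ A.card ∧ ∀ a' ∈ A, ∀ s < α, (p : ℤ) ^ s ∣ (a'.val : ℤ) - a.val →
      ¬ (p : ℤ) ^ (s + 1) ∣ (a'.val : ℤ) - a.val → s ∈ S := by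
  set g : ℕ → ℕ := fun s =>
    p ^ (S.filter (· < s)).card * classCount A (p ^ s) (a.val : ℤ) with hg
  have hmono : ∀ s, classCount A (p ^ (s + 1)) (a.val : ℤ) ≤ classCount A (p ^ s) (a.val : ℤ) := by
    intro s
    refine Finset.card_le_card (Finset.monotone_filter_right _ fun b _ hb => ?_)
    exact dvd_trans (by push_cast; exact pow_dvd_pow _ s.le_succ) hb
  have hfilter : ∀ s ∉ S, S.filter (· < s + 1) = S.filter (· < s) := by
    intro s hs
    refine Finset.filter_congr fun x hx => ?_
    have : x ≠ s := by rintro rfl; exact hs hx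
    omega
  have hfilter' : ∀ s ∈ S, (S.filter (· < s + 1)).card = (S.filter (· < s)).card + 1 := by
    intro s hs
    have : S.filter (· < s + 1) = insert s (S.filter (· < s)) := by
      ext x
      simp only [Finset.mem_filter, Finset.mem_insert]
      constructor
      · rintro ⟨h1, h2⟩
        by_cases h : x = s
        · exact Or.inl h
        · exact Or.inr ⟨h1, by omega⟩
      · rintro (rfl | ⟨h1, h2⟩)
        · exact ⟨hs, by omega⟩
        · exact ⟨h1, by omega⟩
    rw [this, Finset.card_insert_of_notMem (by simp)]
  have hanti : Antitone g := by
    refine antitone_nat_of_succ_le fun s => ?_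
    simp only [hg]
    by_cases hs : s ∈ S
    · rw [hfilter' s hs, hS s hs, pow_succ, mul_assoc]
    · rw [hfilter s hs]
      exact Nat.mul_le_mul_left _ (hmono s)
  have hg0 : g 0 = A.card := by simp [hg, classCount]
  have hgα : p ^ S.card ≤ g α := by
    have h1 : S.filter (· < α) = S :=
      Finset.filter_true_of_mem fun x hx => Finset.mem_range.1 (hSα hx)
    simp only [hg, h1]
    refine Nat.le_mul_of_pos_right _ (Finset.card_pos.2 ⟨a, ?_⟩)
    simp [ha]
  refine ⟨hgα.trans (hg0 ▸ hanti (Nat.zero_le α)), fun a' ha' s hs h1 h2 => ?_⟩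
  by_contra hsS
  have hlt : g (s + 1) < g s := by
    simp only [hg]
    rw [hfilter s hsS]
    refine Nat.mul_lt_mul_of_pos_left (Finset.card_lt_card ?_) (pow_pos hp.pos _)
    rw [Finset.ssubset_iff_of_subset]
    · exact ⟨a', by simpa [ha'] using h1, by simpa [ha'] using h2⟩
    · refine Finset.monotone_filter_right _ fun b _ hb => ?_
      exact dvd_trans (by push_cast; exact pow_dvd_pow _ s.le_succ) hb
  have h3 := hanti (Nat.succ_le_of_lt hs)
  have h4 := hanti (Nat.zero_le s)
  simp only [Nat.succ_eq_add_one] at h3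
  omega

/-- Reduction of `exists_digitSet` mod `M = p ^ α`; distinct integers of the digit set stay distinct
because all positions in `T` are below `α`. -/
theorem exists_digitSet_zmod {M p α : ℕ} (hp : p.Prime) (hM : M = p ^ α) {T : Finset ℕ}
    (hT : T ⊆ Finset.range α) :
    ∃ D : Finset (ZMod M), D.card = p ^ T.card ∧ ∀ x ∈ D, ∀ y ∈ D, x ≠ y →
      ∃ n : ℤ, x - y = n ∧ ∃ t ∈ T, (p : ℤ) ^ t ∣ n ∧ ¬ (p : ℤ) ^ (t + 1) ∣ n := by
  obtain ⟨E, hcard, hE⟩ := exists_digitSet hp T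
  refine ⟨E.image (fun x : ℤ => (x : ZMod M)), ?_, ?_⟩
  · rw [Finset.card_image_of_injOn, hcard]
    intro x hx y hy hxy
    by_contra hne
    obtain ⟨t, ht, -, h⟩ := hE x hx y hy hne
    have hxy' : ((x - y : ℤ) : ZMod M) = 0 := by
      simp only at hxy
      rw [Int.cast_sub, hxy, sub_self]
    rw [ZMod.intCast_zmod_eq_zero_iff_dvd, hM, Nat.cast_pow] at hxy'
    exact h (dvd_trans (pow_dvd_pow _ (Finset.mem_range.1 (hT ht))) hxy')
  · intro x hx y hy hxy
    obtain ⟨u, hu, rfl⟩ := Finset.mem_image.1 hx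
    obtain ⟨v, hv, rfl⟩ := Finset.mem_image.1 hy
    exact ⟨u - v, by simp, hE u hu v hv (by rintro rfl; exact hxy rfl)⟩

/-! ### The tiling -/

/-- If `M = p^α` is a prime power and `A ⊆ ℤ_M` pd-tiles `ℤ_M`,
then `A` tiles `ℤ_M` properly. -/
theorem statement2 (M : ℕ) [NeZero M] (p α : ℕ) (hp : p.Prime) (hM : M = p ^ α)
    (A : Finset (ZMod M))
    (hpd : ∃ f : ZMod M → ℝ, f 0 = 1 ∧ (∀ z, 0 ≤ f z) ∧
      (∀ ξ, (fhat M f ξ).im = 0 ∧ 0 ≤ (fhat M f ξ).re) ∧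
      (∀ x, conv M (fun z => if z ∈ A then (1 : ℝ) else 0) f x = 1)) :
    ∃ B : Finset (ZMod M), IsTiling M A B := by
  classical
  obtain ⟨f, hf0, hf, -, hconv⟩ := hpd
  set χ : ZMod M → ℝ := fun z => if z ∈ A then (1 : ℝ) else 0 with hχ
  have hconv' : conv M χ f = fun _ => 1 := funext hconv
  have hχhat : ∀ ξ, fhat M χ ξ = ∑ a ∈ A, ZMod.stdAddChar (-(a * ξ)) := by
    intro ξ
    rw [fhat_eq]
    simp [hχ, apply_ite, ite_mul]
  have hmul : ∀ ξ, ξ ≠ 0 → fhat M χ ξ * fhat M f ξ = 0 := by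
    intro ξ hξ
    rw [← fhat_conv, hconv', fhat_one M hξ]
  have hsum : (A.card : ℝ) * ∑ z, f z = M := by
    have h := fhat_conv M χ f 0
    rw [hconv', hχhat, fhat_eq, fhat_eq] at h
    simp only [mul_zero, neg_zero, AddChar.map_zero_eq_one, mul_one, Finset.sum_const,
      Finset.card_univ, ZMod.card, nsmul_eq_mul, Complex.ofReal_one] at h
    exact_mod_cast h.symm
  have hM0 : 0 < M := Nat.pos_of_ne_zero (NeZero.ne M)
  have hA : A.Nonempty := by
    rw [Finset.nonempty_iff_ne_empty]
    rintro rfl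
    rw [Finset.card_empty, Nat.cast_zero, zero_mul] at hsum
    exact hM0.ne (by exact_mod_cast hsum)
  -- `s ∈ S` when the transform of `1_A` vanishes at some frequency of order `p^(s+1)`,
  -- that is, a frequency exactly divisible by `p^(α-1-s)`.
  set S : Finset ℕ := (Finset.range α).filter fun s => ∃ n : ℤ, (p : ℤ) ^ (α - 1 - s) ∣ n ∧
    ¬ (p : ℤ) ^ (α - 1 - s + 1) ∣ n ∧ ∑ a ∈ A, (ZMod.stdAddChar (-(a * (n : ZMod M))) : ℂ) = 0
    with hSdef
  have hSα : S ⊆ Finset.range α := Finset.filter_subset _ _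
  have hS : ∀ s ∈ S, ∀ r : ℤ, classCount A (p ^ s) r = p * classCount A (p ^ (s + 1)) r := by
    intro s hs r
    obtain ⟨hsα, n, h1, h2, h0⟩ := Finset.mem_filter.1 hs
    exact classCount_eq_of_vanish hp hM (Finset.mem_range.1 hsα) A n h1 h2 h0 r
  set T : Finset ℕ := Finset.range α \ S with hTdef
  have hTα : T ⊆ Finset.range α := Finset.sdiff_subset
  have hST : p ^ S.card * p ^ T.card = M := by
    rw [hM, ← pow_add, hTdef, add_comm, Finset.card_sdiff_add_card_eq_card hSα, Finset.card_range]
  have hcard : A.card ≤ p ^ S.card := by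
    -- On the dual side, level `t` corresponds to exact divisibility by `p^(α-1-t)`; for `t ∉ S` the
    -- transform of `f` vanishes at all such frequencies.
    set T' := T.image fun t => α - 1 - t with hT'
    have hT'card : T'.card = T.card := by
      refine Finset.card_image_of_injOn fun x hx y hy hxy => ?_
      have h1 := Finset.mem_range.1 (hTα hx)
      have h2 := Finset.mem_range.1 (hTα hy)
      change α - 1 - x = α - 1 - y at hxy
      omega
    have hT'α : T' ⊆ Finset.range α := by
      intro x hx
      obtain ⟨t, ht, rfl⟩ := Finset.mem_image.1 hx
      have h1 := Finset.mem_range.1 (hTα ht)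
      rw [Finset.mem_range]
      omega
    obtain ⟨D, hDcard, hD⟩ := exists_digitSet_zmod hp hM hT'α
    have hle := card_le_sum M f hf0 hf D fun d hd d' hd' hne => by
      have hne0 : d - d' ≠ 0 := sub_ne_zero.2 hne
      obtain ⟨n, hn, u, hu, h1, h2⟩ := hD d hd d' hd' hne
      obtain ⟨t, ht, rfl⟩ := Finset.mem_image.1 hu
      refine (mul_eq_zero.1 (hmul _ hne0)).resolve_left fun h0 => ?_
      rw [hχhat, hn] at h0
      rw [hTdef, Finset.mem_sdiff] at ht
      exact ht.2 (Finset.mem_filter.2 ⟨ht.1, n, h1, h2, h0⟩)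
    have h3 : A.card * D.card ≤ M := by
      have : (A.card : ℝ) * D.card ≤ M :=
        hsum ▸ mul_le_mul_of_nonneg_left hle (Nat.cast_nonneg _)
      exact_mod_cast this
    rw [hDcard, hT'card] at h3
    exact Nat.le_of_mul_le_mul_right (h3.trans hST.ge) (pow_pos hp.pos _)
  -- Differences in `A` live at levels in `S`, differences in `B` at levels in `T`, so the sums
  -- `a + b` are distinct; there are `p^|S| * p^|T| = M` of them.
  obtain ⟨B, hBcard, hB⟩ := exists_digitSet_zmod hp hM hTα
  have hinj : Set.InjOn (fun ab : ZMod M × ZMod M => ab.1 + ab.2) (A ×ˢ B : Finset _) := by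
    rintro ⟨a, b⟩ hab ⟨a', b'⟩ hab' h
    simp only [Finset.coe_product, Set.mem_prod, Finset.mem_coe] at hab hab' h
    by_cases hbb : b = b'
    · subst hbb
      rw [add_right_cancel h]
    exfalso
    obtain ⟨n, hn, t, ht, h1, h2⟩ := hB b hab.2 b' hab'.2 hbb
    have htα := Finset.mem_range.1 (hTα ht)
    have hdvd : (p : ℤ) ^ α ∣ ((a'.val : ℤ) - a.val) - n := by
      rw [← Nat.cast_pow, ← hM, ← ZMod.intCast_zmod_eq_zero_iff_dvd]
      push_cast
      rw [ZMod.natCast_zmod_val, ZMod.natCast_zmod_val, ← hn]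
      linear_combination -h
    have h3 : ∀ k ≤ α, (p : ℤ) ^ k ∣ (a'.val : ℤ) - a.val ↔ (p : ℤ) ^ k ∣ n := by
      intro k hk
      exact dvd_iff_dvd_of_dvd_sub (dvd_trans (pow_dvd_pow _ hk) hdvd)
    have h4 := (le_card_and_mem hp hSα hS hcard hab.1).2 a' hab'.1 t htα
      ((h3 t htα.le).2 h1) (fun h => h2 ((h3 (t + 1) htα).1 h))
    exact (Finset.mem_sdiff.1 ht).2 h4
  obtain ⟨a₀, ha₀⟩ := hA
  have himage : (A ×ˢ B).image (fun ab : ZMod M × ZMod M => ab.1 + ab.2) = Finset.univ := by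
    apply Finset.eq_univ_of_card
    apply le_antisymm (Finset.card_le_univ _)
    rw [Finset.card_image_of_injOn hinj, Finset.card_product, hBcard, ZMod.card]
    refine hST.ge.trans ?_
    exact Nat.mul_le_mul_right _ (le_card_and_mem hp hSα hS hcard ha₀).1
  refine ⟨B, fun z => ?_⟩
  obtain ⟨ab, hab, hz⟩ := Finset.mem_image.1 (himage ▸ Finset.mem_univ z)
  refine ⟨ab, ⟨(Finset.mem_product.1 hab).1, (Finset.mem_product.1 hab).2, hz⟩, ?_⟩
  rintro cd ⟨hc, hd, hcd⟩
  exact hinj (Finset.mem_product.2 ⟨hc, hd⟩) hab (hcd.trans hz.symm)
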